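/- arXiv:1703.10027 — 5 statements merged into one kernel-verified Lean document; each statement's English description precedes it below -/
import Mathlib

section
/- If a configuration (t̄, E) of the call-by-need Storeless Abstract Machine is reachable from an initial configuration (t̄₀, ⟨·⟩)_term, then the plugging E⟨t̄⟩ is a closed and well-named term. -/
/-!
The proof is an invariant argument: for every reachable configuration `(t, E)`, the term `E⟨t⟩` has
no free variables and binds each variable at most once. A closed term with distinct binders is
well-named, so nothing else has to be tracked.

The binders of `E⟨t⟩` are those of `E` together with those of `t` (`ECtx.binders_plug`). Each
rule thus permutes them, drops one (rule 6), or adds those of a fresh copy (rule 5), which are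
distinct and new.

The free variables of `E⟨t⟩` are `FV_M(E)` with `M = FV(t)` (`ECtx.fv_plug`), and `FV_M(E)` is
monotone in `M` and contained in `FV_∅(E) ∪ M` (`ECtx.fv_mono`, `ECtx.mem_fv`). It is therefore
enough that the redex does not gain free variables. Moving a term under the binders of a
substitution context can only remove free variables, so no capture-avoidance condition is
needed; for rule 5 one also uses that α-equivalent terms have the same free variables
(`Term.AlphaEq.mem_fv_iff`).
-/

namespace SAM

/-- Terms of the λ-calculus with explicit substitutions:
`t ::= x | λx.t | t t | t[x←t]` (`esub t x u` denotes `t[x←u]`). -/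
inductive Term : Type
  | var : ℕ → Term
  | lam : ℕ → Term → Term
  | app : Term → Term → Term
  | esub : Term → ℕ → Term → Term
  deriving DecidableEq

namespace Term

/-- Pure terms contain no explicit substitutions. -/
def Pure : Term → Prop
  | var _ => True
  | lam _ t => t.Pure
  | app t u => t.Pure ∧ u.Pure
  | esub _ _ _ => False

/-- Pure values are abstractions of pure terms. -/
def IsPureValue : Term → Prop
  | lam _ t => t.Pure
  | _ => False

/-- The multiset of free variables of a term. -/
def fv : Term → Multiset ℕ
  | var x => {x}
  | lam x t => t.fv.filter (· ≠ x)
  | app t u => t.fv + u.fv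
  | esub t x u => t.fv.filter (· ≠ x) + u.fv

/-- The size of a term. -/
def size : Term → ℕ
  | var _ => 1
  | lam _ t => t.size + 1
  | app t u => t.size + u.size + 1
  | esub t _ u => t.size + u.size + 1

/-- The multiset of variables bound (by λ or by an explicit substitution) in a term. -/
def binders : Term → Multiset ℕ
  | var _ => 0
  | lam x t => x ::ₘ t.binders
  | app t u => t.binders + u.binders
  | esub t x u => x ::ₘ (t.binders + u.binders)

/-- The multiset of all variables occurring (free, bound or binding) in a term. -/
def vars : Term → Multiset ℕ
  | var x => {x}
  | lam x t => x ::ₘ t.vars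
  | app t u => t.vars + u.vars
  | esub t x u => x ::ₘ (t.vars + u.vars)

/-- The number of explicit-substitution constructors occurring in a term. -/
def esubCount : Term → ℕ
  | var _ => 0
  | lam _ t => t.esubCount
  | app t u => t.esubCount + u.esubCount
  | esub t _ u => t.esubCount + u.esubCount + 1

/-- A term is closed if it has no free variables. -/
def Closed (t : Term) : Prop := t.fv = 0

/-- A term is well-named if each variable is bound at most once in it and
no bound variable of it occurs among its free variables. -/
def WellNamed (t : Term) : Prop :=
  t.binders.Nodup ∧ ∀ x ∈ t.binders, x ∉ t.fv

/-- de Bruijn skeletons, used to define α-equivalence. -/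
inductive DB : Type
  | bvar : ℕ → DB
  | fvar : ℕ → DB
  | lam : DB → DB
  | app : DB → DB → DB
  | esub : DB → DB → DB
  deriving DecidableEq

/-- Index of a variable in a list of binders. -/
def dbIndex (x : ℕ) : List ℕ → Option ℕ
  | [] => none
  | y :: Γ => if x = y then some 0 else (dbIndex x Γ).map (· + 1)

/-- Conversion to de Bruijn skeleton, relative to a list of enclosing binders. -/
def toDB : Term → List ℕ → DB
  | var x, Γ =>
      match dbIndex x Γ with
      | some n => DB.bvar n
      | none => DB.fvar x
  | lam x t, Γ => DB.lam (t.toDB (x :: Γ))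
  | app t u, Γ => DB.app (t.toDB Γ) (u.toDB Γ)
  | esub t x u, Γ => DB.esub (t.toDB (x :: Γ)) (u.toDB Γ)

/-- α-equivalence of terms. -/
def AlphaEq (t u : Term) : Prop := t.toDB [] = u.toDB []

/-- The (reflexive) sub-term relation. -/
inductive Subterm : Term → Term → Prop
  | refl (t) : Subterm t t
  | lam {s t} (x) : Subterm s t → Subterm s (Term.lam x t)
  | appL {s t} (u) : Subterm s t → Subterm s (Term.app t u)
  | appR (t) {s u} : Subterm s u → Subterm s (Term.app t u)
  | esubL {s t} (x) (u) : Subterm s t → Subterm s (Term.esub t x u)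
  | esubR (t) (x) {s u} : Subterm s u → Subterm s (Term.esub t x u)

/-- `s` is a sub-term of `t` up to α-equivalence. -/
def SubtermUpToAlpha (s t : Term) : Prop := ∃ s', Subterm s' t ∧ AlphaEq s s'

/-- `v'` is a copy of `v` whose bound variables are renamed to distinct
fresh variables, avoiding the variables in `avoid`. -/
def IsFreshCopy (v v' : Term) (avoid : Multiset ℕ) : Prop :=
  AlphaEq v v' ∧ v'.Pure ∧ v'.binders.Nodup ∧ ∀ x ∈ v'.binders, x ∉ avoid

end Term

/-- Evaluation contexts:
`E ::= ⟨·⟩ | E t̄ | E[x←t̄] | E'⟨x⟩[x←E]`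
(`sub2 E' x E` denotes `E'⟨x⟩[x←E]`; purity of the side terms is
imposed by the well-formedness predicate `ECtx.WF`). -/
inductive ECtx : Type
  | hole : ECtx
  | app : ECtx → Term → ECtx
  | esub : ECtx → ℕ → Term → ECtx
  | sub2 : ECtx → ℕ → ECtx → ECtx
  deriving DecidableEq

namespace ECtx

/-- Well-formedness: all side terms in an evaluation context are pure,
as required by the grammar. -/
def WF : ECtx → Prop
  | hole => True
  | app E t => E.WF ∧ t.Pure
  | esub E _ t => E.WF ∧ t.Pure
  | sub2 E' _ E => E'.WF ∧ E.WF

/-- Substitution contexts `A ::= ⟨·⟩ | A[x←t̄]`. -/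
inductive IsSubst : ECtx → Prop
  | hole : IsSubst ECtx.hole
  | esub {A : ECtx} (x : ℕ) {t : Term} :
      t.Pure → IsSubst A → IsSubst (ECtx.esub A x t)

/-- Plugging a term into the hole of an evaluation context. -/
def plug : ECtx → Term → Term
  | hole, t => t
  | app E u, t => Term.app (E.plug t) u
  | esub E x u, t => Term.esub (E.plug t) x u
  | sub2 E' x E, t => Term.esub (E'.plug (Term.var x)) x (E.plug t)

/-- Plugging an evaluation context into the hole of an evaluation context. -/
def plugC : ECtx → ECtx → ECtx
  | hole, F => F
  | app E u, F => app (E.plugC F) u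
  | esub E x u, F => esub (E.plugC F) x u
  | sub2 E' x E, F => sub2 E' x (E.plugC F)

/-- The multiset `FV_M(E)` of free variables of an evaluation context,
relative to a multiset `M` for the hole. -/
def fv : ECtx → Multiset ℕ → Multiset ℕ
  | hole, M => M
  | app E t, M => E.fv M + t.fv
  | esub E x t, M => (E.fv M).filter (· ≠ x) + t.fv
  | sub2 E' x E, M => (E'.fv {x}).filter (· ≠ x) + E.fv M

end ECtx

/-- Configurations are tagged `term` or `ctxt`. -/
inductive Tag : Type
  | term | ctxt
  deriving DecidableEq

/-- A configuration of the SAM: a (pure) term, an evaluation context, and a tag. -/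
structure Config : Type where
  t : Term
  E : ECtx
  tag : Tag
  deriving DecidableEq

/-- The six rules of the SAM. -/
inductive Rule : Type
  | r1 | r2 | r3 | r4 | r5 | r6
  deriving DecidableEq

/-- Labels of SAM transitions. -/
inductive Label : Type
  | b | s | o
  deriving DecidableEq

/-- The label of each rule: rules (1)–(3) are overhead, rule (4) is beta,
rules (5)–(6) are substitution. -/
def Rule.label : Rule → Label
  | .r1 => .o
  | .r2 => .o
  | .r3 => .o
  | .r4 => .b
  | .r5 => .s
  | .r6 => .s

/-- The labelled transition system of the call-by-need Storeless Abstract Machine. -/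
inductive Step : Config → Rule → Config → Prop
  /-- (1) (t̄ū, E)_term →_o (t̄, E⟨⟨·⟩ū⟩)_term -/
  | r1 {t u : Term} {E : ECtx} :
      t.Pure → u.Pure → E.WF →
      Step ⟨Term.app t u, E, Tag.term⟩ Rule.r1
           ⟨t, E.plugC (ECtx.app ECtx.hole u), Tag.term⟩
  /-- (2) (x, E₁⟨E₂[x←t̄]⟩)_term →_o (t̄, E₁⟨E₂⟨x⟩[x←⟨·⟩]⟩)_term -/
  | r2 {x : ℕ} {t : Term} {E₁ E₂ : ECtx} :
      t.Pure → E₁.WF → E₂.WF →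
      Step ⟨Term.var x, E₁.plugC (ECtx.esub E₂ x t), Tag.term⟩ Rule.r2
           ⟨t, E₁.plugC (ECtx.sub2 E₂ x ECtx.hole), Tag.term⟩
  /-- (3) (v̄, E)_term →_o (v̄, E)_ctxt -/
  | r3 {v : Term} {E : ECtx} :
      v.IsPureValue → E.WF →
      Step ⟨v, E, Tag.term⟩ Rule.r3 ⟨v, E, Tag.ctxt⟩
  /-- (4) (λx.t̄, E⟨A⟨·⟩ū⟩)_ctxt →_b (t̄, E⟨A⟨⟨·⟩[x←ū]⟩⟩)_term -/
  | r4 {x : ℕ} {t u : Term} {E A : ECtx} :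
      t.Pure → u.Pure → E.WF → A.IsSubst →
      Step ⟨Term.lam x t, E.plugC (ECtx.app A u), Tag.ctxt⟩ Rule.r4
           ⟨t, E.plugC (A.plugC (ECtx.esub ECtx.hole x u)), Tag.term⟩
  /-- (5) (v̄, E₁⟨E₂⟨x⟩[x←A]⟩)_ctxt →_s (v̄^≈, E₁⟨A⟨E₂[x←v̄]⟩⟩)_ctxt, if x ∈ FV_∅(E₂),
  where v̄^≈ is a fresh copy of v̄ avoiding all variables of the configuration. -/
  | r5 {x : ℕ} {v v' : Term} {E₁ E₂ A : ECtx} :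
      v.IsPureValue → E₁.WF → E₂.WF → A.IsSubst →
      x ∈ E₂.fv 0 →
      v.IsFreshCopy v' ((E₁.plugC (ECtx.sub2 E₂ x A)).plug v).vars →
      Step ⟨v, E₁.plugC (ECtx.sub2 E₂ x A), Tag.ctxt⟩ Rule.r5
           ⟨v', E₁.plugC (A.plugC (ECtx.esub E₂ x v)), Tag.ctxt⟩
  /-- (6) (v̄, E₁⟨E₂⟨x⟩[x←A]⟩)_ctxt →_s (v̄, E₁⟨A⟨E₂⟩⟩)_ctxt, if x ∉ FV_∅(E₂). -/
  | r6 {x : ℕ} {v : Term} {E₁ E₂ A : ECtx} :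
      v.IsPureValue → E₁.WF → E₂.WF → A.IsSubst →
      x ∉ E₂.fv 0 →
      Step ⟨v, E₁.plugC (ECtx.sub2 E₂ x A), Tag.ctxt⟩ Rule.r6
           ⟨v, E₁.plugC (A.plugC E₂), Tag.ctxt⟩

/-- A finite execution: a sequence of SAM transitions, recorded by its trace of rules. -/
inductive Exec : Config → List Rule → Config → Prop
  | nil (c : Config) : Exec c [] c
  | cons {c c' c'' : Config} {r : Rule} {rs : List Rule} :
      Step c r c' → Exec c' rs c'' → Exec c (r :: rs) c''

/-- `|e|_ℓ`: the number of transitions labelled `ℓ` occurring in an execution trace. -/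
def labelCount (e : List Rule) (ℓ : Label) : ℕ := (e.map Rule.label).count ℓ

/-- A term may serve as the initial term of an initial configuration:
it is pure, closed and well-named. -/
def InitialTerm (t : Term) : Prop := t.Pure ∧ t.Closed ∧ t.WellNamed

/-- A configuration is reachable if some execution from an initial configuration ends at it. -/
def Reachable (c : Config) : Prop :=
  ∃ (t₀ : Term) (e : List Rule),
    InitialTerm t₀ ∧ Exec ⟨t₀, ECtx.hole, Tag.term⟩ e c

/-- The number of maximal subsequences of consecutive transitions consisting
solely of instances of rule (1) in a trace (each such run is counted at its
last element). -/
def countR1Runs : List Rule → ℕ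
  | [] => 0
  | [r] => if r = Rule.r1 then 1 else 0
  | r :: r' :: rs =>
      (if r = Rule.r1 ∧ r' ≠ Rule.r1 then 1 else 0) + countR1Runs (r' :: rs)

/-! ### Free variables under α-equivalence -/

namespace Term

/-- The names of the free-variable leaves of a de Bruijn skeleton. -/
def DB.fvars : DB → Set ℕ
  | DB.bvar _ => ∅
  | DB.fvar x => {x}
  | DB.lam d => d.fvars
  | DB.app d e => d.fvars ∪ e.fvars
  | DB.esub d e => d.fvars ∪ e.fvars

lemma dbIndex_eq_none_iff (x : ℕ) (Γ : List ℕ) : dbIndex x Γ = none ↔ x ∉ Γ := by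
  induction Γ with
  | nil => simp [dbIndex]
  | cons y Γ ih =>
    by_cases h : x = y <;> simp [dbIndex, h, ← ih]

lemma mem_fvars_toDB (t : Term) (Γ : List ℕ) (y : ℕ) :
    y ∈ (t.toDB Γ).fvars ↔ y ∈ t.fv ∧ y ∉ Γ := by
  induction t generalizing Γ with
  | var x =>
    have h := dbIndex_eq_none_iff x Γ
    simp only [toDB, fv, Multiset.mem_singleton]
    cases hx : dbIndex x Γ with
    | none =>
      rw [hx] at h
      simp only [DB.fvars, Set.mem_singleton_iff]
      grind
    | some n =>
      rw [hx] at h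
      simp only [DB.fvars, Set.mem_empty_iff_false]
      grind
  | lam x t ih =>
    simp only [toDB, DB.fvars, ih, fv, Multiset.mem_filter, List.mem_cons]
    tauto
  | app t u iht ihu =>
    simp only [toDB, DB.fvars, iht, ihu, fv, Set.mem_union, Multiset.mem_add]
    tauto
  | esub t x u iht ihu =>
    simp only [toDB, DB.fvars, iht, ihu, fv, Set.mem_union, Multiset.mem_add,
      Multiset.mem_filter, List.mem_cons]
    tauto

lemma AlphaEq.mem_fv_iff {t u : Term} (h : AlphaEq t u) (y : ℕ) : y ∈ t.fv ↔ y ∈ u.fv := by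
  have ht := mem_fvars_toDB t [] y
  have hu := mem_fvars_toDB u [] y
  rw [show t.toDB [] = u.toDB [] from h] at ht
  simpa using ht.symm.trans hu

lemma binders_subset_vars (t : Term) : t.binders ⊆ t.vars := by
  intro y hy
  induction t with
  | var x => simp [binders] at hy
  | lam x t ih =>
    simp only [binders, vars, Multiset.mem_cons] at hy ⊢
    tauto
  | app t u iht ihu =>
    simp only [binders, vars, Multiset.mem_add] at hy ⊢
    tauto
  | esub t x u iht ihu =>
    simp only [binders, vars, Multiset.mem_cons, Multiset.mem_add] at hy ⊢
    tauto

end Term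

/-! ### Binders and free variables of a plugging -/

namespace ECtx

/-- The multiset of variables bound by an evaluation context, whether or not the binder scopes
over the hole. -/
def binders : ECtx → Multiset ℕ
  | hole => 0
  | app E t => E.binders + t.binders
  | esub E x t => x ::ₘ (E.binders + t.binders)
  | sub2 E' x E => x ::ₘ (E'.binders + E.binders)

lemma binders_plug (E : ECtx) (t : Term) : (E.plug t).binders = E.binders + t.binders := by
  induction E generalizing t with
  | hole => simp [plug, binders]
  | app E u ih => simp only [plug, binders, Term.binders, ih]; abel
  | esub E x u ih =>
    simp only [plug, binders, Term.binders, ih, ← Multiset.singleton_add]; abel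
  | sub2 E' x E ih' ih =>
    simp only [plug, binders, Term.binders, ih, ih', ← Multiset.singleton_add]; abel

lemma binders_plugC (E F : ECtx) : (E.plugC F).binders = E.binders + F.binders := by
  induction E with
  | hole => simp [plugC, binders]
  | app E u ih => simp only [plugC, binders, ih]; abel
  | esub E x u ih => simp only [plugC, binders, ih, ← Multiset.singleton_add]; abel
  | sub2 E' x E _ ih => simp only [plugC, binders, ih, ← Multiset.singleton_add]; abel

lemma fv_plug (E : ECtx) (t : Term) : (E.plug t).fv = E.fv t.fv := by
  induction E generalizing t with
  | hole => rfl
  | app E u ih => simp only [plug, fv, Term.fv, ih]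
  | esub E x u ih => simp only [plug, fv, Term.fv, ih]
  | sub2 E' x E ih' ih => simp only [plug, fv, Term.fv, ih, ih']

lemma fv_plugC (E F : ECtx) (M : Multiset ℕ) : (E.plugC F).fv M = E.fv (F.fv M) := by
  induction E with
  | hole => rfl
  | app E u ih => simp only [plugC, fv, ih]
  | esub E x u ih => simp only [plugC, fv, ih]
  | sub2 E' x E _ ih => simp only [plugC, fv, ih]

lemma fv_mono (E : ECtx) {M N : Multiset ℕ} (h : M ⊆ N) : E.fv M ⊆ E.fv N := by
  intro y
  induction E with
  | hole => exact @h y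
  | app E u ih => simp only [fv, Multiset.mem_add]; tauto
  | esub E x u ih => simp only [fv, Multiset.mem_add, Multiset.mem_filter]; tauto
  | sub2 E' x E _ ih => simp only [fv, Multiset.mem_add]; tauto

lemma mem_fv {E : ECtx} {M : Multiset ℕ} {y : ℕ} (h : y ∈ E.fv M) : y ∈ E.fv 0 ∨ y ∈ M := by
  induction E with
  | hole => exact Or.inr h
  | app E u ih => simp only [fv, Multiset.mem_add] at h ⊢; tauto
  | esub E x u ih => simp only [fv, Multiset.mem_add, Multiset.mem_filter] at h ⊢; tauto
  | sub2 E' x E _ ih => simp only [fv, Multiset.mem_add] at h ⊢; tauto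

lemma fv_zero_subset (E : ECtx) (M : Multiset ℕ) : E.fv 0 ⊆ E.fv M :=
  E.fv_mono (Multiset.zero_subset M)

/-- `FV_M(E)` consists of `FV_∅(E)` and of the elements of `M` that `E` does not capture; whether
`y` is captured depends only on `E` and `y`, so `M` can be exchanged for any `N` containing `y`. -/
lemma mem_fv_of_mem {E : ECtx} {M N : Multiset ℕ} {y : ℕ} (h : y ∈ E.fv M) (hy : y ∈ N) :
    y ∈ E.fv N := by
  induction E with
  | hole => exact hy
  | app E u ih => simp only [fv, Multiset.mem_add] at h ⊢; tauto
  | esub E x u ih => simp only [fv, Multiset.mem_add, Multiset.mem_filter] at h ⊢; tauto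
  | sub2 E' x E _ ih => simp only [fv, Multiset.mem_add] at h ⊢; tauto

lemma fv_eq_zero_of_subset {E : ECtx} {M N : Multiset ℕ} (h : E.fv M = 0) (hNM : N ⊆ M) :
    E.fv N = 0 :=
  Multiset.eq_zero_of_forall_notMem fun y hy => by
    have := E.fv_mono hNM hy
    simp [h] at this

/-- The substitution step `E₂⟨x⟩[x←A⟨v⟩] ↦ A⟨K⟩` creates no free variable, provided those of `K`
come from `v` or from the part of `E₂` outside the hole, with `x` excluded. -/
lemma fv_subst_subset {A E₂ : ECtx} {x : ℕ} {M K : Multiset ℕ}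
    (hK : ∀ y ∈ K, (y ∈ E₂.fv 0 ∧ y ≠ x) ∨ y ∈ M) :
    A.fv K ⊆ (sub2 E₂ x A).fv M := by
  intro y hy
  simp only [fv, Multiset.mem_add, Multiset.mem_filter]
  rcases mem_fv hy with h | h
  · exact Or.inr (A.fv_zero_subset M h)
  · rcases hK y h with h' | h'
    · exact Or.inl ⟨E₂.fv_zero_subset _ h'.1, h'.2⟩
    · exact Or.inr (mem_fv_of_mem hy h')

end ECtx

/-! ### Preservation of the invariant -/

/-- The invariant of the machine: the plugging of the configuration is closed and its binders are
pairwise distinct. -/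
def Config.Inv (c : Config) : Prop :=
  (c.E.plug c.t).fv = 0 ∧ (c.E.plug c.t).binders.Nodup

lemma Step.inv {c c' : Config} {r : Rule} (hs : Step c r c') (h : c.Inv) : c'.Inv := by
  obtain ⟨hf, hb⟩ := h
  simp only [ECtx.fv_plug, ECtx.binders_plug] at hf hb
  simp only [Config.Inv, ECtx.fv_plug, ECtx.binders_plug]
  cases hs with
  | r1 _ _ _ =>
    constructor
    · simpa only [ECtx.fv_plugC, ECtx.fv, Term.fv] using hf
    · simp only [ECtx.binders_plugC, ECtx.binders, Term.binders] at hb ⊢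
      convert hb using 1
      abel
  | @r2 x t E₁ E₂ _ _ _ =>
    constructor
    · simpa only [ECtx.fv_plugC, ECtx.fv, Term.fv] using hf
    · simp only [ECtx.binders_plugC, ECtx.binders, Term.binders,
        ← Multiset.singleton_add] at hb ⊢
      convert hb using 1
      abel
  | r3 _ _ => exact ⟨hf, hb⟩
  | @r4 x t u E A _ _ _ _ =>
    constructor
    · simp only [ECtx.fv_plugC] at hf ⊢
      refine ECtx.fv_eq_zero_of_subset hf fun y hy => ?_
      simp only [ECtx.fv, Term.fv, Multiset.mem_add] at hy ⊢
      rcases ECtx.mem_fv hy with h | h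
      · exact Or.inl (A.fv_zero_subset _ h)
      · rcases Multiset.mem_add.1 h with h | h
        · exact Or.inl (ECtx.mem_fv_of_mem hy h)
        · exact Or.inr h
    · simp only [ECtx.binders_plugC, ECtx.binders, Term.binders,
        ← Multiset.singleton_add] at hb ⊢
      convert hb using 1
      abel
  | @r5 x v v' E₁ E₂ A _ _ _ _ _ hcopy =>
    obtain ⟨hα, _, hnd, hfresh⟩ := hcopy
    constructor
    · simp only [ECtx.fv_plugC] at hf ⊢
      refine ECtx.fv_eq_zero_of_subset hf (ECtx.fv_subst_subset fun y hy => ?_)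
      simp only [ECtx.fv, Multiset.mem_add, Multiset.mem_filter] at hy
      rcases hy with ⟨hy, hyx⟩ | hy
      · rcases ECtx.mem_fv hy with h | h
        · exact Or.inl ⟨h, hyx⟩
        · exact Or.inr ((hα.mem_fv_iff y).2 h)
      · exact Or.inr hy
    · have hdisj : Disjoint ((E₁.plugC (ECtx.sub2 E₂ x A)).binders + v.binders) v'.binders := by
        refine Multiset.disjoint_left.2 fun {y} hy hy' => hfresh y hy' ?_
        rw [← ECtx.binders_plug] at hy
        exact Term.binders_subset_vars _ hy
      have hnew := (Multiset.nodup_add).2 ⟨hb, hnd, hdisj⟩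
      simp only [ECtx.binders_plugC, ECtx.binders, ← Multiset.singleton_add] at hnew ⊢
      convert hnew using 1
      abel
  | @r6 x v E₁ E₂ A _ _ _ _ hx =>
    constructor
    · simp only [ECtx.fv_plugC] at hf ⊢
      refine ECtx.fv_eq_zero_of_subset hf (ECtx.fv_subst_subset fun y hy => ?_)
      rcases ECtx.mem_fv hy with h | h
      · exact Or.inl ⟨h, fun hyx => hx (hyx ▸ h)⟩
      · exact Or.inr h
    · refine Multiset.nodup_of_le ?_ hb
      simp only [ECtx.binders_plugC, ECtx.binders, ← Multiset.singleton_add]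
      refine le_of_le_of_eq (Multiset.le_add_left _ {x}) ?_
      abel

lemma Exec.inv {c c' : Config} {e : List Rule} (he : Exec c e c') (h : c.Inv) : c'.Inv := by
  induction he with
  | nil => exact h
  | cons hs _ ih => exact ih (hs.inv h)

/-- If a configuration `(t̄, E)` is reachable from an initial
configuration `(t̄₀, ⟨·⟩)_term`, then the plugging `E⟨t̄⟩` is closed and well-named. -/
theorem reachable_plug_closed_wellNamed
    (t₀ : Term) (h₀ : InitialTerm t₀)
    (t : Term) (E : ECtx) (tg : Tag) (e : List Rule)
    (hexec : Exec ⟨t₀, ECtx.hole, Tag.term⟩ e ⟨t, E, tg⟩) :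
    (E.plug t).Closed ∧ (E.plug t).WellNamed := by
  obtain ⟨_, hclosed, hwn⟩ := h₀
  have hinit : Config.Inv ⟨t₀, ECtx.hole, Tag.term⟩ := ⟨hclosed, hwn.1⟩
  obtain ⟨hf, hb⟩ := hexec.inv hinit
  refine ⟨hf, hb, fun x _ hx => ?_⟩
  simp only at hf
  simp [hf] at hx

end SAM
end

section
/- For every execution e of the call-by-need Storeless Abstract Machine from an initial configuration (t̄₀, ⟨·⟩)_term, the number of overhead transitions satisfies |e|_o ≤ |t̄₀| · (5·|e|_b + 2) + (3·|e|_b + 1), where |t̄₀| is the size of the initial term. -/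
/-!
The proof is an amortized analysis. Let `S` be the size of the initial term. Every term occurring
in a reachable configuration has size at most `S` (`Step.bounded`): the machine only moves sub-terms
around, and α-renaming preserves sizes. To a configuration attach the potential obtained by adding
`S` for each explicit substitution `[x←u]` with `u` not a value to the `spine` of the active term
when the tag is `term`.

Rules 1 and 3 consume one unit of spine. Rule 2 either enters a non-value, and then the weight `S`
of that substitution pays for the new spine (it is not charged again, since the substitution is
restored with a value by rule 5 or removed by rule 6), or it enters a value, and then the spine
drops from 2 to 1. Rules 5 and 6 leave the potential unchanged. Rule 4 increases it by at most
`2 * S + 1`. Hence the overhead is at most `(S + 1) + |e|_b * (2 * S + 1)`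
(`Exec.overhead_le`), which is below the stated bound.
-/

namespace SAM

/-- The size of a de Bruijn skeleton, matching `Term.size`. -/
def Term.DB.size : Term.DB → ℕ
  | .bvar _ => 1
  | .fvar _ => 1
  | .lam t => t.size + 1
  | .app t u => t.size + u.size + 1
  | .esub t u => t.size + u.size + 1

theorem Term.size_toDB (t : Term) (Γ : List ℕ) : (t.toDB Γ).size = t.size := by
  induction t generalizing Γ with
  | var x => simp only [Term.toDB]; split <;> rfl
  | lam x t ih => simp [Term.toDB, Term.DB.size, Term.size, ih]
  | app t u iht ihu => simp [Term.toDB, Term.DB.size, Term.size, iht, ihu]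
  | esub t x u iht ihu => simp [Term.toDB, Term.DB.size, Term.size, iht, ihu]

theorem Term.AlphaEq.size_eq {t u : Term} (h : t.AlphaEq u) : t.size = u.size := by
  rw [← Term.size_toDB t [], ← Term.size_toDB u [], h]

/-- Upper bound on the overhead transitions needed to reach and leave the head of a term without
entering an explicit substitution holding a non-value: one per application on the left spine, plus
one (rule 3) if the head is an abstraction, or two (rules 2 and 3) if it is a variable. The value at explicit substitutions is arbitrary, active
terms being pure. -/
def Term.spine : Term → ℕ
  | .var _ => 2
  | .lam _ _ => 1
  | .app t _ => t.spine + 1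
  | .esub _ _ _ => 0

theorem Term.spine_le (t : Term) : t.spine ≤ t.size + 1 := by
  induction t <;> simp only [Term.spine, Term.size] <;> omega

/-- The potential `S` of a suspended term that is not yet a value; abstractions carry none. -/
def Term.weight (S : ℕ) : Term → ℕ
  | .lam _ _ => 0
  | _ => S

theorem Term.weight_le (S : ℕ) (t : Term) : t.weight S ≤ S := by
  cases t <;> simp [Term.weight]

/-- Every side term of the evaluation context has size at most `S`. -/
def ECtx.Bounded (S : ℕ) : ECtx → Prop
  | .hole => True
  | .app E t => E.Bounded S ∧ t.size ≤ S
  | .esub E _ t => E.Bounded S ∧ t.size ≤ S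
  | .sub2 E' _ E => E'.Bounded S ∧ E.Bounded S

/-- Total weight of the terms held by the explicit substitutions of the context, including those
inside the left parts `E'` of `E'⟨x⟩[x←E]`. -/
def ECtx.weight (S : ℕ) : ECtx → ℕ
  | .hole => 0
  | .app E _ => E.weight S
  | .esub E _ t => E.weight S + t.weight S
  | .sub2 E' _ E => E'.weight S + E.weight S

theorem ECtx.bounded_plugC (S : ℕ) (E F : ECtx) :
    (E.plugC F).Bounded S ↔ E.Bounded S ∧ F.Bounded S := by
  induction E <;> simp_all [ECtx.plugC, ECtx.Bounded] <;> tauto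

theorem ECtx.weight_plugC (S : ℕ) (E F : ECtx) :
    (E.plugC F).weight S = E.weight S + F.weight S := by
  induction E <;> simp_all [ECtx.plugC, ECtx.weight] <;> omega

/-- The invariant of executions: all terms in the configuration have size at most `S`. -/
def Config.Bounded (S : ℕ) (c : Config) : Prop := c.t.size ≤ S ∧ c.E.Bounded S

/-- The potential of a configuration. The active term only counts in the `term` phase. -/
def Config.potential (S : ℕ) (c : Config) : ℕ :=
  (if c.tag = Tag.term then c.t.spine else 0) + c.E.weight S

theorem Step.bounded {S : ℕ} {c c' : Config} {r : Rule} (h : Step c r c')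
    (hc : c.Bounded S) : c'.Bounded S := by
  cases h with
  | r5 hv _ _ _ _ hcopy =>
    have := hcopy.1.size_eq
    simp only [Config.Bounded, ECtx.bounded_plugC, ECtx.Bounded] at hc ⊢
    grind
  | _ =>
    simp only [Config.Bounded, ECtx.bounded_plugC, ECtx.Bounded, Term.size] at hc ⊢
    grind

/-- Overhead transitions consume potential, `s`-transitions do not increase it, and a
`b`-transition adds at most `2 * S + 1`: at most `S + 1` for the new active term and at most `S` for
the new explicit substitution. -/
theorem Step.potential_le {S : ℕ} {c c' : Config} {r : Rule} (h : Step c r c')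
    (hc : c.Bounded S) :
    c'.potential S + (if r.label = Label.o then 1 else 0) ≤
      c.potential S + (if r.label = Label.b then 2 * S + 1 else 0) := by
  cases h with
  | r1 =>
    simp [Config.potential, ECtx.weight_plugC, ECtx.weight, Rule.label, Term.spine]
  | @r2 x t E₁ E₂ ht =>
    simp only [Config.Bounded, ECtx.bounded_plugC, ECtx.Bounded] at hc
    have hs := t.spine_le
    -- Either `t` is a value, of spine 1, or its weight `S` is released and pays for its spine.
    have key : t.spine + 1 ≤ 2 + t.weight S := by
      cases t <;> simp only [Term.spine, Term.weight] at hs ⊢ <;> omega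
    simp [Config.potential, ECtx.weight_plugC, ECtx.weight, Rule.label] at key ⊢
    simp only [Term.spine]
    omega
  | @r3 v E hv =>
    cases v <;> simp [Term.IsPureValue] at hv
    simp [Config.potential, Rule.label, Term.spine]
  | @r4 x t u E A =>
    simp only [Config.Bounded, Term.size] at hc
    have hs := t.spine_le
    have hw := u.weight_le S
    simp [Config.potential, ECtx.weight_plugC, ECtx.weight, Rule.label]
    omega
  | @r5 x v v' E₁ E₂ A hv =>
    cases v <;> simp [Term.IsPureValue] at hv
    simp [Config.potential, ECtx.weight_plugC, ECtx.weight, Rule.label, Term.weight]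
    omega
  | r6 =>
    simp [Config.potential, ECtx.weight_plugC, ECtx.weight, Rule.label]
    omega

theorem Exec.overhead_le {S : ℕ} {c c' : Config} {e : List Rule} (h : Exec c e c')
    (hc : c.Bounded S) :
    labelCount e Label.o ≤ c.potential S + labelCount e Label.b * (2 * S + 1) := by
  induction h with
  | nil c => simp [labelCount]
  | @cons c c' c'' r rs hstep _ ih =>
    have h1 := ih (hstep.bounded hc)
    have h2 := hstep.potential_le hc
    simp only [labelCount, List.map_cons, List.count_cons, beq_iff_eq] at h1 ⊢
    split_ifs at h2 ⊢ <;> simp only [add_mul, one_mul] <;> omega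

/-- For every execution `e` from an initial configuration
`(t̄₀, ⟨·⟩)_term`, `|e|_o ≤ |t̄₀| · (5·|e|_b + 2) + (3·|e|_b + 1)`. -/
theorem overhead_bound
    (t₀ : Term) (h₀ : InitialTerm t₀)
    (c : Config) (e : List Rule)
    (hexec : Exec ⟨t₀, ECtx.hole, Tag.term⟩ e c) :
    labelCount e Label.o ≤
      t₀.size * (5 * labelCount e Label.b + 2) + (3 * labelCount e Label.b + 1) := by
  have h := hexec.overhead_le (S := t₀.size) ⟨le_rfl, trivial⟩
  have hs := t₀.spine_le
  simp only [Config.potential, ECtx.weight, if_true] at h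
  nlinarith [Nat.zero_le (t₀.size * labelCount e Label.b)]

end SAM
end

section
/- For every execution e of the call-by-need Storeless Abstract Machine from an initial configuration, the number of occurrences of rule (3) (the transition (v̄, E)_term →_o (v̄, E)_ctxt) in e is at most |e|_b + |e|_s + 1, and hence at most 2·|e|_b + 1. -/
/-!
Rule (3) turns the tag `term` into `ctxt`, rule (4) is the only rule that turns `ctxt` back into
`term`, and no other rule changes the tag. Hence occurrences of rules (3) and (4) alternate in
every execution, and one starting with the tag `term` uses rule (3) at most once more than
rule (4), that is, at most `|e|_b + 1` times (`Exec.count_r3_add_le`). This is sharper than both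
claimed bounds, so the number `|e|_s` of substitution steps need not be compared with `|e|_b`.
-/

namespace SAM

/-- Rules (3) and (4) alternate: an execution starting with the tag `ctxt` must use rule (4)
before each use of rule (3), which accounts for the extra `1` on the left in that case. -/
theorem Exec.count_r3_add_le {c c' : Config} {e : List Rule} (h : Exec c e c') :
    e.count Rule.r3 + (if c.tag = Tag.ctxt then 1 else 0) ≤ labelCount e Label.b + 1 := by
  induction h with
  | nil c => simp only [List.count_nil]; split <;> omega
  | cons hstep _ ih =>
    cases hstep <;> simp_all [labelCount, Rule.label]

/-- For every execution `e` from an initial configuration,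
the number of occurrences of rule (3) in `e` is at most `|e|_b + |e|_s + 1`,
and hence at most `2·|e|_b + 1`. -/
theorem rule3_bound
    (t₀ : Term) (h₀ : InitialTerm t₀)
    (c : Config) (e : List Rule)
    (hexec : Exec ⟨t₀, ECtx.hole, Tag.term⟩ e c) :
    e.count Rule.r3 ≤ labelCount e Label.b + labelCount e Label.s + 1 ∧
    e.count Rule.r3 ≤ 2 * labelCount e Label.b + 1 := by
  have h := hexec.count_r3_add_le
  rw [if_neg (by simp)] at h
  omega

end SAM
end

section
/- In any execution of the call-by-need Storeless Abstract Machine from an initial configuration, the number of maximal subsequences of consecutive transitions consisting solely of instances of rule (1) is at most |e|_b + |e|_s + n₂ + n₃ + 1, where n₂ and n₃ are respectively the numbers of occurrences of rules (2) and (3) in the execution e; in particular it is at most 5·|e|_b + 2. -/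
/-!
Both bounds count the maximal runs of rule (1) by what delimits them.

Two distinct runs are separated by at least one transition that is not an instance of rule (1),
and every such transition is counted in `|e|_b + |e|_s + n₂ + n₃`; this gives the first bound and
is a fact about words over the rules (`countR1Runs_le_others`).

For the second bound one looks at how a run starts. Rule (1) fires on an application under the
tag `term`, so a run is either at the very beginning, or follows a rule (4), or follows a rule (2)
that has just entered an explicit substitution whose content is an application. Entering such a
substitution destroys it for good: when the machine leaves it by rule (5), its content is a value.
Such substitutions are created only by rule (4), so at most `|e|_b` runs start after a rule (2),
and there are at most `2·|e|_b + 1` runs overall. The invariant (`Exec.countR1Runs_le`) bounds the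
runs of an execution from an arbitrary configuration by `2·|e|_b` plus the number of
application-substitutions in its context (`ECtx.appSubs`), plus one if rule (1) is about to fire.
-/

namespace SAM

/-- `1` if the term is an application, `0` otherwise. -/
def Term.appInd : Term → ℕ
  | .app _ _ => 1
  | _ => 0

/-- The number of explicit substitutions `[x←t]` in an evaluation context whose content `t` is an
application. Substitutions `E'⟨x⟩[x←E]` under evaluation are not counted themselves, but those
inside `E'` and `E` are. -/
def ECtx.appSubs : ECtx → ℕ
  | .hole => 0
  | .app E _ => E.appSubs
  | .esub E _ t => E.appSubs + t.appInd
  | .sub2 E' _ E => E'.appSubs + E.appSubs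

/-- `1` if the configuration is tagged `term` and its term is an application, so that rule (1) is
the only rule that may apply; `0` otherwise. -/
def Config.appInd (c : Config) : ℕ :=
  match c.tag with
  | .term => c.t.appInd
  | .ctxt => 0

theorem ECtx.appSubs_plugC (E F : ECtx) : (E.plugC F).appSubs = E.appSubs + F.appSubs := by
  induction E with
  | hole => simp [plugC, appSubs]
  | app E u ih => simp [plugC, appSubs, ih]
  | esub E x u ih => simp only [plugC, appSubs, ih]; omega
  | sub2 E' x E _ ih => simp only [plugC, appSubs, ih]; omega

theorem Term.appInd_le_one (t : Term) : t.appInd ≤ 1 := by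
  cases t <;> simp [appInd]

theorem Term.IsPureValue.appInd_eq_zero {v : Term} (h : v.IsPureValue) : v.appInd = 0 := by
  cases v <;> simp_all [IsPureValue, appInd]

theorem Config.appInd_le_one (c : Config) : c.appInd ≤ 1 := by
  obtain ⟨t, E, _ | _⟩ := c
  · exact t.appInd_le_one
  · exact Nat.zero_le _

theorem Step.r1_iff {c c' : Config} {r : Rule} (h : Step c r c') :
    r = Rule.r1 ↔ c.appInd = 1 := by
  cases h with
  | r3 hv _ => simp [Config.appInd, hv.appInd_eq_zero]
  | _ => simp [Config.appInd, Term.appInd]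

/-- The potential `appSubs + appInd` grows by at most two, and only at a beta transition. Rule (1)
is left out because there the potential also has to pay for a run that ends. -/
theorem Step.potential_le_s12 {c c' : Config} {r : Rule} (h : Step c r c') (hr : r ≠ Rule.r1) :
    c'.E.appSubs + c'.appInd ≤ 2 * labelCount [r] Label.b + (c.E.appSubs + c.appInd) := by
  cases h with
  | r1 => exact absurd rfl hr
  | r2 =>
    simp only [ECtx.appSubs_plugC, ECtx.appSubs, Config.appInd]
    omega
  | r3 => simp only [Config.appInd]; omega
  | r4 =>
    rename_i x t u E A _ _ _ _
    have h1 := t.appInd_le_one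
    have h2 := u.appInd_le_one
    simp only [ECtx.appSubs_plugC, ECtx.appSubs, Config.appInd, labelCount, Rule.label,
      List.map_cons, List.map_nil, List.count_singleton_self]
    omega
  | r5 hv =>
    simp only [ECtx.appSubs_plugC, ECtx.appSubs, Config.appInd, hv.appInd_eq_zero]
    omega
  | r6 =>
    simp only [ECtx.appSubs_plugC, ECtx.appSubs, Config.appInd]
    omega

theorem labelCount_cons (r : Rule) (e : List Rule) (l : Label) :
    labelCount (r :: e) l = labelCount [r] l + labelCount e l := by
  simp only [labelCount, List.map_cons, List.map_nil, List.count_cons, List.count_nil]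
  omega

theorem countR1Runs_cons_of_ne {r : Rule} (hr : r ≠ Rule.r1) (e : List Rule) :
    countR1Runs (r :: e) = countR1Runs e := by
  cases e <;> simp [countR1Runs, hr]

/-- Runs of rule (1) in an execution from an arbitrary configuration. -/
theorem Exec.countR1Runs_le {c c' : Config} {e : List Rule} (h : Exec c e c') :
    countR1Runs e ≤ 2 * labelCount e Label.b + (c.E.appSubs + c.appInd) := by
  induction h with
  | nil c => simp [countR1Runs]
  | @cons c d c' r rs hs hrest ih =>
    rw [labelCount_cons]
    by_cases hr : r = Rule.r1
    · have hc : c.appInd = 1 := hs.r1_iff.1 hr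
      have hE : d.E.appSubs = c.E.appSubs := by
        subst hr
        cases hs
        simp [ECtx.appSubs_plugC, ECtx.appSubs]
      have hd := d.appInd_le_one
      cases hrest with
      | nil => simp [countR1Runs, hr, hc]; omega
      | @cons _ d' _ r' rs' hs' _ =>
        by_cases hr' : r' = Rule.r1
        -- the run goes on: it is counted in the tail
        · simp only [countR1Runs, hr', ne_eq, not_true, and_false, if_false] at ih ⊢
          omega
        -- the run ends here, and then the next configuration is not about to fire rule (1)
        · have hd' : d.appInd ≠ 1 := fun h1 => hr' (hs'.r1_iff.2 h1)
          simp only [countR1Runs, hr, ne_eq, hr', not_false_eq_true, and_self, if_true]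
          omega
    · have := hs.potential_le_s12 hr
      rw [countR1Runs_cons_of_ne hr]
      omega

/-- In any word over the rules, the number of runs of rule (1) exceeds the number of letters other
than rule (1) by at most one. -/
theorem countR1Runs_le_others (e : List Rule) :
    countR1Runs e ≤
      labelCount e Label.b + labelCount e Label.s + e.count Rule.r2 + e.count Rule.r3 + 1 := by
  -- a word not starting with rule (1) has no more runs than other letters
  suffices H : countR1Runs e ≤ labelCount e Label.b + labelCount e Label.s +
      e.count Rule.r2 + e.count Rule.r3 + (if e.head? = some Rule.r1 then 1 else 0) by
    split_ifs at H <;> omega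
  induction e with
  | nil => simp [countR1Runs]
  | cons r rs ih =>
    by_cases hr : r = Rule.r1
    · subst hr
      cases rs with
      | nil => simp [countR1Runs]
      | cons r' rs' =>
        by_cases hr' : r' = Rule.r1
        · subst hr'
          simpa [countR1Runs, labelCount, Rule.label] using ih
        · simp [countR1Runs, labelCount, Rule.label, hr'] at ih ⊢
          omega
    · rw [countR1Runs_cons_of_ne hr]
      have hle : (if rs.head? = some Rule.r1 then 1 else 0) ≤ 1 := by split_ifs <;> omega
      cases r <;> simp [labelCount, Rule.label] at hr ih ⊢ <;> omega

/-- In any execution from an initial configuration, the number of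
maximal subsequences of consecutive transitions consisting solely of instances
of rule (1) is at most `|e|_b + |e|_s + n₂ + n₃ + 1`, where `n₂`, `n₃` are the
numbers of occurrences of rules (2) and (3); in particular it is at most
`5·|e|_b + 2`. -/
theorem rule1_runs_count_bound
    (t₀ : Term) (h₀ : InitialTerm t₀)
    (c : Config) (e : List Rule)
    (hexec : Exec ⟨t₀, ECtx.hole, Tag.term⟩ e c) :
    countR1Runs e ≤
      labelCount e Label.b + labelCount e Label.s +
        e.count Rule.r2 + e.count Rule.r3 + 1 ∧
    countR1Runs e ≤ 5 * labelCount e Label.b + 2 := by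
  refine ⟨countR1Runs_le_others e, ?_⟩
  have h := hexec.countR1Runs_le
  have h1 := Config.appInd_le_one ⟨t₀, ECtx.hole, Tag.term⟩
  simp only [ECtx.appSubs] at h
  omega

end SAM
end

section
/- No transition of the call-by-need Storeless Abstract Machine other than the beta transition increases the number of explicit substitutions: if (t̄, E) → (t̄', E') is an instance of one of the rules (1), (2), (3), (5) or (6), then the number of explicit-substitution constructors occurring in the plugging E'⟨t̄'⟩ is at most the number occurring in E⟨t̄⟩. In particular, rule (5) copies a pure value, so no explicit substitutions are copied, and rule (6) strictly decreases the count by one. -/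
/-!
The number of explicit substitutions extends to evaluation contexts and is additive under
plugging, both of terms (`ECtx.esubCount_plug`) and of contexts (`ECtx.esubCount_plugC`).
Hence for each rule both sides are sums of the counts of the components of the configuration.
Rules (1)–(3) only rearrange these components. Rule (5) duplicates a pure value, whose count
is zero (`Term.IsPureValue.esubCount_eq_zero`), and keeps the substitution on `x`; rule (6)
removes exactly that substitution.
-/

namespace SAM

/-- A pure term has no explicit substitutions to count. -/
theorem Term.Pure.esubCount_eq_zero : ∀ {t : Term}, t.Pure → t.esubCount = 0
  | .var _, _ => rfl
  | .lam _ t, h => Term.Pure.esubCount_eq_zero (t := t) h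
  | .app _ _, h => by
      simp [Term.esubCount, Term.Pure.esubCount_eq_zero h.1, Term.Pure.esubCount_eq_zero h.2]
  | .esub _ _ _, h => h.elim

theorem Term.IsPureValue.esubCount_eq_zero {v : Term} (h : v.IsPureValue) :
    v.esubCount = 0 := by
  cases v with
  | lam x t => exact Term.Pure.esubCount_eq_zero (t := t) h
  | _ => exact h.elim

/-- The number of explicit-substitution constructors in an evaluation context; in
`E'⟨x⟩[x←E]` it counts those of both `E'` and `E` and the outer one. -/
def ECtx.esubCount : ECtx → ℕ
  | .hole => 0
  | .app E t => E.esubCount + t.esubCount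
  | .esub E _ t => E.esubCount + t.esubCount + 1
  | .sub2 E' _ E => E'.esubCount + E.esubCount + 1

theorem ECtx.esubCount_plug (E : ECtx) (t : Term) :
    (E.plug t).esubCount = E.esubCount + t.esubCount := by
  induction E generalizing t with
  | hole => simp [ECtx.plug, ECtx.esubCount]
  | app E u ih => simp only [ECtx.plug, ECtx.esubCount, Term.esubCount, ih]; omega
  | esub E x u ih => simp only [ECtx.plug, ECtx.esubCount, Term.esubCount, ih]; omega
  | sub2 E' x E ih' ih =>
      simp only [ECtx.plug, ECtx.esubCount, Term.esubCount, ih, ih']; omega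

theorem ECtx.esubCount_plugC (E F : ECtx) :
    (E.plugC F).esubCount = E.esubCount + F.esubCount := by
  induction E with
  | hole => simp [ECtx.plugC, ECtx.esubCount]
  | app E u ih => simp only [ECtx.plugC, ECtx.esubCount, ih]; omega
  | esub E x u ih => simp only [ECtx.plugC, ECtx.esubCount, ih]; omega
  | sub2 E' x E _ ih => simp only [ECtx.plugC, ECtx.esubCount, ih]; omega

/-- No transition other than the beta transition increases the
number of explicit substitutions: for an instance of rule (1), (2), (3), (5)
or (6), the number of explicit-substitution constructors in `E'⟨t̄'⟩` is at
most that in `E⟨t̄⟩`; moreover rule (6) strictly decreases the count by one. -/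
theorem nonbeta_esubCount
    (t t' : Term) (E E' : ECtx) (tg tg' : Tag) (r : Rule)
    (hstep : Step ⟨t, E, tg⟩ r ⟨t', E', tg'⟩)
    (hr : r ≠ Rule.r4) :
    (E'.plug t').esubCount ≤ (E.plug t).esubCount ∧
    (r = Rule.r6 → (E'.plug t').esubCount + 1 = (E.plug t).esubCount) := by
  cases hstep with
  | r4 => exact absurd rfl hr
  | r1 =>
      simp only [ECtx.esubCount_plug, ECtx.esubCount_plugC, ECtx.esubCount, Term.esubCount]
      exact ⟨by omega, by simp⟩
  | r2 =>
      simp only [ECtx.esubCount_plug, ECtx.esubCount_plugC, ECtx.esubCount, Term.esubCount]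
      exact ⟨by omega, by simp⟩
  | r3 => exact ⟨le_rfl, by simp⟩
  | r5 hv _ _ _ _ hcopy =>
      simp only [ECtx.esubCount_plug, ECtx.esubCount_plugC, ECtx.esubCount,
        hv.esubCount_eq_zero, hcopy.2.1.esubCount_eq_zero]
      exact ⟨by omega, by simp⟩
  | r6 =>
      simp only [ECtx.esubCount_plug, ECtx.esubCount_plugC, ECtx.esubCount]
      exact ⟨by omega, fun _ => by omega⟩

end SAM
end
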